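/- arXiv:math/9809080 — 3 statements merged into one kernel-verified Lean document; each statement's English description precedes it below -/
import Mathlib

section
/- Let a ∈ 𝒜 and A := [[0, a],[a*, 0]] ∈ M₂(𝒜). Let N₁ be the unital subalgebra of M₂(𝒜) generated by A together with 𝒟, and let N₂ := M₂(ℂ1). Then the following are equivalent: (i) N₁ and N₂ are free with amalgamation over 𝒟, i.e. E_D(X₁ X₂ ⋯ Xₙ) = 0 whenever n ≥ 1, each Xₘ lies in N₁ or in N₂ with consecutive factors from different of the two algebras, and E_D(Xₘ) = 0 for every m; (ii) a satisfies the alternating-word condition (i.e., a is R-diagonal). (Proposition 3.8.) -/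
open scoped BigOperators
open ComplexOrder

noncomputable section

variable {A : Type*} [Ring A] [Algebra ℂ A] [StarRing A]

/-- 2×2 matrices over `A`. -/
abbrev M₂ (A : Type*) := Matrix (Fin 2) (Fin 2) A

/-- The matrix `A = [[0, a], [a*, 0]]`. -/
def Amat (a : A) : M₂ A := !![0, a; star a, 0]

/-- The conditional expectation `E_D : M₂(𝒜) → 𝒟` onto the scalar diagonal matrices. -/
def ED (φ : A →ₗ[ℂ] ℂ) (X : M₂ A) : M₂ A :=
  !![algebraMap ℂ A (φ (X 0 0)), 0; 0, algebraMap ℂ A (φ (X 1 1))]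

/-- Membership in `M₂(ℂ1)`, the scalar matrices. -/
def IsScalarMat (X : M₂ A) : Prop := ∀ i j, ∃ c : ℂ, X i j = algebraMap ℂ A c

/-- Membership in `𝒟`, the scalar diagonal matrices. -/
def IsDiagScalar (X : M₂ A) : Prop :=
  (∃ c : ℂ, X 0 0 = algebraMap ℂ A c) ∧ (∃ c : ℂ, X 1 1 = algebraMap ℂ A c) ∧
    X 0 1 = 0 ∧ X 1 0 = 0

/-- The elements `w_{ij;k}(b)` of Lemma 3.9 (indices shifted: `0 ↔ 1`, `1 ↔ 2`). -/
def wElt (φ : A →ₗ[ℂ] ℂ) (b : A) (i j : Fin 2) (k : ℕ) : A :=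
  if i = 0 then
    if j = 0 then (b * star b) ^ k - algebraMap ℂ A (φ ((b * star b) ^ k))
    else b * (star b * b) ^ (k - 1)
  else
    if j = 0 then star b * (b * star b) ^ (k - 1)
    else (star b * b) ^ k - algebraMap ℂ A (φ ((star b * b) ^ k))

/-- The alternating-word condition (R-diagonality). -/
def AltWordCond (φ : A →ₗ[ℂ] ℂ) (b : A) : Prop :=
  ∀ (n : ℕ), 0 < n → ∀ (i : Fin (n + 1) → Fin 2) (k : Fin n → ℕ), (∀ m, 1 ≤ k m) →
    φ ((List.ofFn fun m : Fin n =>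
        wElt φ b (1 - i m.castSucc) (i m.succ) (k m)).prod) = 0

/-- `N₁ = Alg({A} ∪ 𝒟)` and `N₂ = M₂(ℂ1)` are free with amalgamation over `𝒟`:
`E_D` vanishes on every alternating product of `E_D`-centered elements of `N₁`, `N₂`. -/
def FreeAmalgOverD (φ : A →ₗ[ℂ] ℂ) (a : A) : Prop :=
  ∀ (n : ℕ) (t : Fin (n + 1) → Fin 2) (Z : Fin (n + 1) → M₂ A),
    (∀ m, Z m ∈ (if t m = 0 then
        ((Algebra.adjoin ℂ (insert (Amat a) {X : M₂ A | IsDiagScalar X}) :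
          Subalgebra ℂ (M₂ A)) : Set (M₂ A))
      else {X : M₂ A | IsScalarMat X})) →
    (∀ m, ED φ (Z m) = 0) →
    (∀ m : Fin n, t m.castSucc ≠ t m.succ) →
    ED φ ((List.ofFn Z).prod) = 0

/-!
Left multiplication by `A = [[0, a], [a*, 0]]` shifts the powers of `A`, and left multiplication by
`𝒟` rescales rows, so the entries of elements of `N₁` are combinations of entries of powers of `A`;
centring those gives exactly the `w_{pq;k}(a)`. A centred element of `N₂` has only off-diagonal
scalar entries, so between two centred elements of `N₁` it joins the column index `q` to the row
index `1 - q`. This is the index rule of alternating words, so the diagonal entries of alternating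
products are combinations of alternating words. Conversely, `w_{pq;k}(a) ⊗ E_pq` lies in `N₁`, and
inserting the matrix units `E_{q,1-q}` between such elements turns an alternating word into an
entry of an alternating product.
-/

section PathProducts

variable {ι M : Type*} [Monoid M] {R : ι → M → ι → Prop}

/-- `x` is the product of the labels along a nonempty path starting at `s` in the labelled graph
with an edge from `s` to `t` labelled `x` whenever `R s x t`. Both alternating products and
alternating words are of this kind. -/
inductive IsPathProd (R : ι → M → ι → Prop) : ι → M → Prop
  | single {s t : ι} {x : M} (hx : R s x t) : IsPathProd R s x
  | cons {s t : ι} {x y : M} (hx : R s x t) (hy : IsPathProd R t y) : IsPathProd R s (x * y)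

lemma isPathProd_prod_ofFn {n : ℕ} (s : Fin (n + 2) → ι) (x : Fin (n + 1) → M)
    (h : ∀ m, R (s m.castSucc) (x m) (s m.succ)) : IsPathProd R (s 0) (List.ofFn x).prod := by
  induction n with
  | zero => simpa using IsPathProd.single (h 0)
  | succ n ih =>
    rw [List.ofFn_succ, List.prod_cons]
    exact .cons (h 0) (ih (s ·.succ) (x ·.succ) fun m => h m.succ)

lemma IsPathProd.exists_prod_ofFn {s₀ : ι} {y : M} (h : IsPathProd R s₀ y) :
    ∃ (n : ℕ) (s : Fin (n + 2) → ι) (x : Fin (n + 1) → M), s 0 = s₀ ∧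
      (∀ m, R (s m.castSucc) (x m) (s m.succ)) ∧ (List.ofFn x).prod = y := by
  induction h with
  | @single s t x hx => exact ⟨0, ![s, t], ![x], rfl, by simpa using hx, by simp⟩
  | @cons s t x y hx _ ih =>
    obtain ⟨n, s', x', rfl, hx', rfl⟩ := ih
    refine ⟨n + 1, Fin.cons s s', Fin.cons x x', rfl, Fin.cases hx fun m => ?_, by simp⟩
    simpa only [← Fin.succ_castSucc, Fin.cons_succ] using hx' m

lemma forall_isPathProd_iff {P : M → Prop} :
    (∀ s x, IsPathProd R s x → P x) ↔
      ∀ (n : ℕ) (s : Fin (n + 2) → ι) (x : Fin (n + 1) → M),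
        (∀ m, R (s m.castSucc) (x m) (s m.succ)) → P (List.ofFn x).prod := by
  refine ⟨fun H n s x h => H _ _ (isPathProd_prod_ofFn s x h), fun H s y h => ?_⟩
  obtain ⟨n, s, x, -, hx, rfl⟩ := h.exists_prod_ofFn
  exact H n s x hx

end PathProducts

lemma fin_two_eq_one_sub {s t : Fin 2} (h : s ≠ t) : t = 1 - s := by
  decide +revert

lemma fin_two_ne_one_sub (t : Fin 2) : t ≠ 1 - t := by
  decide +revert

/-- The algebra `N₁` generated by `A = [[0, a], [a*, 0]]` and `𝒟`. -/
abbrev adjoinAmat (a : A) : Subalgebra ℂ (M₂ A) :=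
  Algebra.adjoin ℂ (insert (Amat a) {X : M₂ A | IsDiagScalar X})

/-- The factors of alternating products: the `E_D`-centred elements of `N₁` (for `t = 0`) and of
`N₂` (for `t = 1`). -/
def IsCenteredLetter (φ : A →ₗ[ℂ] ℂ) (a : A) (t : Fin 2) (Z : M₂ A) : Prop :=
  Z ∈ (if t = 0 then (adjoinAmat a : Set (M₂ A)) else {X : M₂ A | IsScalarMat X}) ∧ ED φ Z = 0

/-- Alternating products: the path products in which the vertex is the algebra (`0` for `N₁`, `1`
for `N₂`) that the next factor comes from. -/
abbrev IsAltProd (φ : A →ₗ[ℂ] ℂ) (a : A) : Fin 2 → M₂ A → Prop :=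
  IsPathProd fun s Z t => s ≠ t ∧ IsCenteredLetter φ a s Z

/-- Alternating words in the `w_{pq;k}(a)`: the path products in which the vertices are the indices
`i₀, …, iₙ` of the alternating-word condition, so that the first factor has row index `1 - i₀`. -/
abbrev IsAltWord (φ : A →ₗ[ℂ] ℂ) (a : A) : Fin 2 → A → Prop :=
  IsPathProd fun i x j => ∃ k, 1 ≤ k ∧ wElt φ a (1 - i) j k = x

lemma freeAmalgOverD_iff_forall_isAltProd (φ : A →ₗ[ℂ] ℂ) (a : A) :
    FreeAmalgOverD φ a ↔ ∀ t X, IsAltProd φ a t X → ED φ X = 0 := by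
  rw [forall_isPathProd_iff]
  constructor
  · intro H n t Z h
    exact H n (t ·.castSucc) Z (fun m => (h m).2.1) (fun m => (h m).2.2) fun m => (h m.castSucc).1
  · intro H n t Z hmem hED hne
    refine H n (Fin.snoc t (1 - t (Fin.last n))) Z fun m => ⟨?_, ?_⟩
    · refine m.lastCases ?_ fun m => ?_
      · simpa only [Fin.succ_last, Fin.snoc_castSucc, Fin.snoc_last] using fin_two_ne_one_sub _
      · simpa only [Fin.succ_castSucc, Fin.snoc_castSucc] using hne m
    · simpa only [Fin.snoc_castSucc] using ⟨hmem m, hED m⟩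

lemma altWordCond_iff_forall_isAltWord (φ : A →ₗ[ℂ] ℂ) (a : A) :
    AltWordCond φ a ↔ ∀ i x, IsAltWord φ a i x → φ x = 0 := by
  rw [forall_isPathProd_iff]
  constructor
  · intro H n i x h
    choose k hk hw using h
    simpa only [hw] using H (n + 1) n.succ_pos i k hk
  · rintro H (_ | n) hn i k hk
    · exact absurd hn (lt_irrefl 0)
    · exact H n i _ fun m => ⟨k m, hk m, rfl⟩

lemma map_algebraMap_of_map_one {R B : Type*} [CommSemiring R] [Semiring B] [Algebra R B]
    {φ : B →ₗ[R] R} (hφ1 : φ 1 = 1) (c : R) : φ (algebraMap R B c) = c := by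
  rw [Algebra.algebraMap_eq_smul_one, map_smul, hφ1, smul_eq_mul, mul_one]

lemma ED_eq_zero_iff {B : Type*} [Ring B] [Algebra ℂ B] {φ : B →ₗ[ℂ] ℂ} (hφ1 : φ 1 = 1)
    {X : M₂ B} : ED φ X = 0 ↔ ∀ p, φ (X p p) = 0 := by
  have algebraMap_eq_zero (c : ℂ) : algebraMap ℂ B c = 0 ↔ c = 0 :=
    ⟨fun h => by rw [← map_algebraMap_of_map_one hφ1 c, h, map_zero], fun h => by rw [h, map_zero]⟩
  simp [ED, ← Matrix.ext_iff, Fin.forall_fin_two, algebraMap_eq_zero]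

/-! ### Powers of `A` -/

section AmatPowers

variable {B : Type*} [Ring B] [StarRing B]

lemma Amat_mul_apply (a : B) (X : M₂ B) (p q : Fin 2) :
    (Amat a * X) p q = Amat a p (1 - p) * X (1 - p) q := by
  fin_cases p <;> simp [Amat, Matrix.mul_apply]

lemma Amat_pow_two_mul (a : B) (k : ℕ) :
    Amat a ^ (2 * k) = Matrix.diagonal ![(a * star a) ^ k, (star a * a) ^ k] := by
  have Amat_sq : Amat a ^ 2 = Matrix.diagonal ![a * star a, star a * a] := by
    rw [pow_two, Amat, Matrix.mul_fin_two]
    ext p q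
    fin_cases p <;> fin_cases q <;> simp
  rw [pow_mul, Amat_sq, Matrix.diagonal_pow]
  congr 1
  ext p
  fin_cases p <;> rfl

lemma Amat_pow_two_mul_add_one (a : B) (k : ℕ) :
    Amat a ^ (2 * k + 1) = !![0, a * (star a * a) ^ k; star a * (a * star a) ^ k, 0] := by
  rw [pow_succ', Amat_pow_two_mul, Amat]
  ext p q
  fin_cases p <;> fin_cases q <;> simp

end AmatPowers

lemma wElt_self (φ : A →ₗ[ℂ] ℂ) (a : A) (p : Fin 2) (k : ℕ) :
    wElt φ a p p k =
      (Amat a ^ (2 * k)) p p - algebraMap ℂ A (φ ((Amat a ^ (2 * k)) p p)) := by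
  rw [Amat_pow_two_mul]
  fin_cases p <;> simp [wElt]

lemma wElt_of_ne (φ : A →ₗ[ℂ] ℂ) (a : A) {p q : Fin 2} (hpq : p ≠ q) (k : ℕ) :
    wElt φ a p q k = (Amat a ^ (2 * (k - 1) + 1)) p q := by
  rw [Amat_pow_two_mul_add_one]
  fin_cases p <;> fin_cases q <;> simp_all [wElt]

/-- The span of the `(p, q)` entries of the powers of `A`. -/
def powEntrySpan (a : A) (p q : Fin 2) : Submodule ℂ A :=
  Submodule.span ℂ (Set.range fun n : ℕ => (Amat a ^ n) p q)

lemma Amat_apply_mul_mem_powEntrySpan {a y : A} {p q : Fin 2}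
    (hy : y ∈ powEntrySpan a (1 - p) q) : Amat a p (1 - p) * y ∈ powEntrySpan a p q := by
  suffices powEntrySpan a (1 - p) q ≤
      (powEntrySpan a p q).comap (LinearMap.mulLeft ℂ (Amat a p (1 - p))) from this hy
  refine Submodule.span_le.2 ?_
  rintro _ ⟨n, rfl⟩
  exact Submodule.subset_span ⟨n + 1, by simp only [pow_succ', Amat_mul_apply,
    LinearMap.mulLeft_apply]⟩

lemma IsDiagScalar.exists_mul_apply_eq_smul {B : Type*} [Ring B] [Algebra ℂ B] {D : M₂ B}
    (hD : IsDiagScalar D) (p : Fin 2) :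
    ∃ c : ℂ, ∀ (X : M₂ B) (q : Fin 2), (D * X) p q = c • X p q := by
  obtain ⟨⟨c, hc⟩, ⟨d, hd⟩, h01, h10⟩ := hD
  refine ⟨![c, d] p, fun X q => ?_⟩
  fin_cases p <;> simp [Matrix.mul_apply, hc, hd, h01, h10, Algebra.smul_def]

lemma apply_mem_powEntrySpan {a : A} {X : M₂ A} (hX : X ∈ adjoinAmat a) (p q : Fin 2) :
    X p q ∈ powEntrySpan a p q := by
  rw [← Subalgebra.mem_toSubmodule, Algebra.adjoin_eq_span] at hX
  induction hX using Submodule.span_induction with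
  | mem X hX =>
    induction hX using Submonoid.closure_induction_left generalizing p with
    | one => exact Submodule.subset_span ⟨0, by simp only [pow_zero]⟩
    | mul_left Y hY X _ ih =>
      rcases hY with rfl | hY
      · rw [Amat_mul_apply]
        exact Amat_apply_mul_mem_powEntrySpan (ih _)
      · obtain ⟨c, hc⟩ := IsDiagScalar.exists_mul_apply_eq_smul hY p
        rw [hc]
        exact Submodule.smul_mem _ c (ih p)
  | zero => exact Submodule.zero_mem _
  | add X Y _ _ hX hY => exact Submodule.add_mem _ hX hY
  | smul c X _ hX => exact Submodule.smul_mem _ c hX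

/-! ### From alternating words to alternating products -/

lemma single_algebraMap_mem_adjoinAmat (a : A) (p : Fin 2) (c : ℂ) :
    Matrix.single p p (algebraMap ℂ A c) ∈ adjoinAmat a := by
  refine Algebra.subset_adjoin (Or.inr ?_)
  fin_cases p
  · exact ⟨⟨c, by simp⟩, ⟨0, by simp⟩, by simp, by simp⟩
  · exact ⟨⟨0, by simp⟩, ⟨c, by simp⟩, by simp, by simp⟩

lemma single_apply_mem_adjoinAmat {a : A} {X : M₂ A} (hX : X ∈ adjoinAmat a) (p q : Fin 2) :
    Matrix.single p q (X p q) ∈ adjoinAmat a := by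
  have hpXq := mul_mem (mul_mem (single_algebraMap_mem_adjoinAmat a p 1) hX)
    (single_algebraMap_mem_adjoinAmat a q 1)
  simpa only [Matrix.single_mul_mul_single, map_one, one_mul, mul_one] using hpXq

lemma single_wElt_mem_adjoinAmat (φ : A →ₗ[ℂ] ℂ) (a : A) (p q : Fin 2) (k : ℕ) :
    Matrix.single p q (wElt φ a p q k) ∈ adjoinAmat a := by
  have single_pow_mem (n : ℕ) : Matrix.single p q ((Amat a ^ n) p q) ∈ adjoinAmat a :=
    single_apply_mem_adjoinAmat (pow_mem (Algebra.subset_adjoin (Set.mem_insert _ _)) n) p q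
  by_cases hpq : p = q
  · subst hpq
    rw [wElt_self, sub_eq_add_neg, Matrix.single_add, ← Matrix.single_neg, ← sub_eq_add_neg]
    exact sub_mem (single_pow_mem _) (single_algebraMap_mem_adjoinAmat a p _)
  · rw [wElt_of_ne φ a hpq]
    exact single_pow_mem _

lemma isCenteredLetter_single_wElt {φ : A →ₗ[ℂ] ℂ} (hφ1 : φ 1 = 1) (a : A) (p q : Fin 2)
    (k : ℕ) : IsCenteredLetter φ a 0 (Matrix.single p q (wElt φ a p q k)) := by
  refine ⟨single_wElt_mem_adjoinAmat φ a p q k, (ED_eq_zero_iff hφ1).2 fun r => ?_⟩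
  by_cases hr : p = r ∧ q = r
  · obtain ⟨rfl, rfl⟩ := hr
    rw [Matrix.single_apply_same, wElt_self, map_sub, map_algebraMap_of_map_one hφ1, sub_self]
  · rw [Matrix.single_apply_of_ne _ _ _ _ _ hr, map_zero]

lemma isCenteredLetter_single_one {φ : A →ₗ[ℂ] ℂ} (hφ1 : φ 1 = 1) (a : A) (p : Fin 2) :
    IsCenteredLetter φ a 1 (Matrix.single p (1 - p) 1) := by
  refine ⟨fun i j => ⟨Matrix.single p (1 - p) 1 i j, ?_⟩, (ED_eq_zero_iff hφ1).2 fun r => ?_⟩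
  · simp only [Matrix.single_apply]
    split_ifs <;> simp
  · have hr : ¬(p = r ∧ 1 - p = r) := fun h => fin_two_ne_one_sub p (h.1.trans h.2.symm)
    rw [Matrix.single_apply_of_ne _ _ _ _ _ hr, map_zero]

lemma IsAltWord.isAltProd_single {φ : A →ₗ[ℂ] ℂ} (hφ1 : φ 1 = 1) {a : A} {i : Fin 2} {x : A}
    (hx : IsAltWord φ a i x) (r : Fin 2) : IsAltProd φ a 0 (Matrix.single (1 - i) r x) := by
  induction hx with
  | @single i j _ hx =>
    obtain ⟨k, -, rfl⟩ := hx
    have hw := isCenteredLetter_single_wElt hφ1 a (1 - i) j k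
    by_cases hjr : j = r
    · exact .single ⟨zero_ne_one, hjr ▸ hw⟩
    · rw [fin_two_eq_one_sub hjr, ← mul_one (wElt _ _ _ _ _),
        ← Matrix.single_mul_single_same _ _ j]
      exact .cons ⟨zero_ne_one, hw⟩ (.single ⟨one_ne_zero, isCenteredLetter_single_one hφ1 a j⟩)
  | @cons i j _ y hx _ ih =>
    obtain ⟨k, -, rfl⟩ := hx
    rw [← Matrix.single_mul_single_same _ _ j, ← one_mul y,
      ← Matrix.single_mul_single_same _ _ (1 - j)]
    exact .cons ⟨zero_ne_one, isCenteredLetter_single_wElt hφ1 a (1 - i) j k⟩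
      (.cons ⟨one_ne_zero, isCenteredLetter_single_one hφ1 a j⟩ ih)

theorem FreeAmalgOverD.altWordCond {φ : A →ₗ[ℂ] ℂ} (hφ1 : φ 1 = 1) {a : A}
    (h : FreeAmalgOverD φ a) : AltWordCond φ a := by
  rw [freeAmalgOverD_iff_forall_isAltProd] at h
  rw [altWordCond_iff_forall_isAltWord]
  intro i x hx
  have hED := h 0 _ (IsAltWord.isAltProd_single hφ1 hx (1 - i))
  simpa using (ED_eq_zero_iff hφ1).1 hED (1 - i)

/-! ### From alternating products to alternating words -/

/-- The span of the centred monomials `w_{pq;k}(a)`, `k ≥ 1`. -/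
def wSpan (φ : A →ₗ[ℂ] ℂ) (a : A) (p q : Fin 2) : Submodule ℂ A :=
  Submodule.span ℂ {x | ∃ k, 1 ≤ k ∧ wElt φ a p q k = x}

/-- The span of the alternating words with first index `i₀ = i`. -/
def altWordSpan (φ : A →ₗ[ℂ] ℂ) (a : A) (i : Fin 2) : Submodule ℂ A :=
  Submodule.span ℂ {x | IsAltWord φ a i x}

lemma sub_algebraMap_mem_wSpan {φ : A →ₗ[ℂ] ℂ} (hφ1 : φ 1 = 1) {a x : A} {p : Fin 2}
    (hx : x ∈ powEntrySpan a p p) : x - algebraMap ℂ A (φ x) ∈ wSpan φ a p p := by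
  suffices powEntrySpan a p p ≤
      (wSpan φ a p p).comap (LinearMap.id - Algebra.linearMap ℂ A ∘ₗ φ) from this hx
  refine Submodule.span_le.2 ?_
  rintro _ ⟨n, rfl⟩
  change (Amat a ^ n) p p - algebraMap ℂ A (φ ((Amat a ^ n) p p)) ∈ wSpan φ a p p
  obtain ⟨k, rfl | rfl⟩ := n.even_or_odd'
  · rcases k.eq_zero_or_pos with rfl | hk
    · simp [hφ1]
    · exact Submodule.subset_span ⟨k, hk, wElt_self φ a p k⟩
  · have apply_self_eq_zero : (Amat a ^ (2 * k + 1)) p p = 0 := by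
      rw [Amat_pow_two_mul_add_one]
      fin_cases p <;> rfl
    simp [apply_self_eq_zero]

lemma powEntrySpan_le_wSpan (φ : A →ₗ[ℂ] ℂ) (a : A) {p q : Fin 2} (hpq : p ≠ q) :
    powEntrySpan a p q ≤ wSpan φ a p q := by
  refine Submodule.span_le.2 ?_
  rintro _ ⟨n, rfl⟩
  obtain ⟨k, rfl | rfl⟩ := n.even_or_odd'
  · simp [Amat_pow_two_mul, hpq]
  · exact Submodule.subset_span ⟨k + 1, k.succ_pos, wElt_of_ne φ a hpq (k + 1)⟩

lemma IsCenteredLetter.apply_mem_wSpan {φ : A →ₗ[ℂ] ℂ} (hφ1 : φ 1 = 1) {a : A} {Z : M₂ A}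
    (hZ : IsCenteredLetter φ a 0 Z) (p q : Fin 2) : Z p q ∈ wSpan φ a p q := by
  have hZpq : Z p q ∈ powEntrySpan a p q := apply_mem_powEntrySpan hZ.1 p q
  by_cases hpq : p = q
  · subst hpq
    simpa [(ED_eq_zero_iff hφ1).1 hZ.2 p] using sub_algebraMap_mem_wSpan hφ1 hZpq
  · exact powEntrySpan_le_wSpan φ a hpq hZpq

lemma IsCenteredLetter.apply_mem_one {φ : A →ₗ[ℂ] ℂ} {a : A} {Z : M₂ A}
    (hZ : IsCenteredLetter φ a 1 Z) (p q : Fin 2) : Z p q ∈ (1 : Submodule ℂ A) := by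
  obtain ⟨c, hc⟩ := hZ.1 p q
  exact Submodule.mem_one.2 ⟨c, hc.symm⟩

lemma IsCenteredLetter.apply_self {φ : A →ₗ[ℂ] ℂ} (hφ1 : φ 1 = 1) {a : A} {Z : M₂ A}
    (hZ : IsCenteredLetter φ a 1 Z) (p : Fin 2) : Z p p = 0 := by
  obtain ⟨c, hc⟩ := hZ.1 p p
  have hφZ := (ED_eq_zero_iff hφ1).1 hZ.2 p
  rw [hc, map_algebraMap_of_map_one hφ1] at hφZ
  rw [hc, hφZ, map_zero]

lemma wSpan_le_altWordSpan (φ : A →ₗ[ℂ] ℂ) (a : A) (p q : Fin 2) :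
    wSpan φ a p q ≤ altWordSpan φ a (1 - p) := by
  refine Submodule.span_mono ?_
  rintro _ ⟨k, hk, rfl⟩
  exact .single ⟨k, hk, by rw [sub_sub_cancel]⟩

lemma wSpan_mul_altWordSpan_le (φ : A →ₗ[ℂ] ℂ) (a : A) (p q : Fin 2) :
    wSpan φ a p q * altWordSpan φ a q ≤ altWordSpan φ a (1 - p) := by
  rw [wSpan, altWordSpan, Submodule.span_mul_span]
  refine Submodule.span_mono ?_
  rintro _ ⟨_, ⟨k, hk, rfl⟩, y, hy, rfl⟩
  exact .cons ⟨k, hk, by rw [sub_sub_cancel]⟩ hy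

lemma wSpan_mul_one_sup_altWordSpan_le (φ : A →ₗ[ℂ] ℂ) (a : A) (p q : Fin 2) :
    wSpan φ a p q * (1 ⊔ altWordSpan φ a q) ≤ altWordSpan φ a (1 - p) := by
  rw [Submodule.mul_sup, mul_one]
  exact sup_le (wSpan_le_altWordSpan φ a p q) (wSpan_mul_altWordSpan_le φ a p q)

lemma IsCenteredLetter.mul_apply_mem_altWordSpan_of_zero {φ : A →ₗ[ℂ] ℂ} (hφ1 : φ 1 = 1) {a : A}
    {Z X : M₂ A} (hZ : IsCenteredLetter φ a 0 Z)
    (hX : ∀ p q, X p q ∈ 1 ⊔ altWordSpan φ a p) (p q : Fin 2) :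
    (Z * X) p q ∈ altWordSpan φ a (1 - p) := by
  rw [Matrix.mul_apply]
  exact Submodule.sum_mem _ fun i _ => wSpan_mul_one_sup_altWordSpan_le φ a p i
    (Submodule.mul_mem_mul (hZ.apply_mem_wSpan hφ1 p i) (hX i q))

lemma IsCenteredLetter.mul_apply_mem_altWordSpan_of_one {φ : A →ₗ[ℂ] ℂ} (hφ1 : φ 1 = 1) {a : A}
    {Z X : M₂ A} (hZ : IsCenteredLetter φ a 1 Z)
    (hX : ∀ p q, X p q ∈ altWordSpan φ a (1 - p)) (p q : Fin 2) :
    (Z * X) p q ∈ altWordSpan φ a p := by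
  rw [Matrix.mul_apply]
  refine Submodule.sum_mem _ fun i _ => ?_
  by_cases hpi : p = i
  · simp [← hpi, hZ.apply_self hφ1 p]
  · rw [← one_mul (altWordSpan φ a p)]
    refine Submodule.mul_mem_mul (hZ.apply_mem_one p i) ?_
    simpa only [fin_two_eq_one_sub (Ne.symm hpi)] using hX i q

-- The summand `1` is there for products consisting of a single factor from `N₂`.
lemma IsAltProd.apply_mem_altWordSpan {φ : A →ₗ[ℂ] ℂ} (hφ1 : φ 1 = 1) {a : A} {t : Fin 2} {X : M₂ A}
    (hX : IsAltProd φ a t X) :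
    (t = 0 → ∀ p q, X p q ∈ altWordSpan φ a (1 - p)) ∧
      (t = 1 → ∀ p q, X p q ∈ 1 ⊔ altWordSpan φ a p ∧ X p p ∈ altWordSpan φ a p) := by
  induction hX with
  | single hZ =>
    refine ⟨?_, ?_⟩ <;> rintro rfl p q
    · exact wSpan_le_altWordSpan φ a p q (hZ.2.apply_mem_wSpan hφ1 p q)
    · exact ⟨Submodule.mem_sup_left (hZ.2.apply_mem_one p q), by simp [hZ.2.apply_self hφ1 p]⟩
  | cons hZ _ ih =>
    refine ⟨?_, ?_⟩ <;> rintro rfl p q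
    · have hX := ih.2 (fin_two_eq_one_sub hZ.1)
      exact hZ.2.mul_apply_mem_altWordSpan_of_zero hφ1 (fun i j => (hX i j).1) p q
    · have hX := ih.1 (fin_two_eq_one_sub hZ.1)
      have hZX := hZ.2.mul_apply_mem_altWordSpan_of_one hφ1 hX p
      exact ⟨Submodule.mem_sup_right (hZX q), hZX p⟩

theorem AltWordCond.freeAmalgOverD {φ : A →ₗ[ℂ] ℂ} (hφ1 : φ 1 = 1) {a : A}
    (h : AltWordCond φ a) : FreeAmalgOverD φ a := by
  rw [altWordCond_iff_forall_isAltWord] at h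
  rw [freeAmalgOverD_iff_forall_isAltProd]
  intro t X hX
  rw [ED_eq_zero_iff hφ1]
  have altWordSpan_le_ker (i : Fin 2) : altWordSpan φ a i ≤ LinearMap.ker φ :=
    Submodule.span_le.2 (h i)
  obtain ⟨hX₀, hX₁⟩ := IsAltProd.apply_mem_altWordSpan hφ1 hX
  intro p
  obtain rfl | rfl : t = 0 ∨ t = 1 := by omega
  · exact altWordSpan_le_ker _ (hX₀ rfl p p)
  · exact altWordSpan_le_ker _ (hX₁ rfl p p).2

theorem freeAmalgOverD_iff_altWordCond_general {φ : A →ₗ[ℂ] ℂ} (hφ1 : φ 1 = 1) (a : A) :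
    FreeAmalgOverD φ a ↔ AltWordCond φ a :=
  ⟨FreeAmalgOverD.altWordCond hφ1, AltWordCond.freeAmalgOverD hφ1⟩

/-- Proposition 3.8: `Alg({A} ∪ 𝒟)` and `M₂(ℂ1)` are free with amalgamation over `𝒟`
if and only if `a` satisfies the alternating-word condition (i.e. `a` is R-diagonal). -/
theorem freeAmalgOverD_iff_altWordCond
    (φ : A →ₗ[ℂ] ℂ)
    (hφ1 : φ 1 = 1)
    (hφpos : ∀ x : A, 0 ≤ φ (star x * x))
    (hφtr : ∀ x y : A, φ (x * y) = φ (y * x))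
    (a : A) :
    FreeAmalgOverD φ a ↔ AltWordCond φ a := by
  exact freeAmalgOverD_iff_altWordCond_general hφ1 a
end
end

section
/- Let a, ξ ∈ 𝒜 with the pair (ξ, ξ*) fulfilling the conjugate relations for (a, a*), and set X := [[0, ξ*],[ξ, 0]] ∈ M₂(𝒜). Then X fulfills the conjugate relations for A with respect to the scalars: φ₂(X Aⁿ) = Σ_{m=1}^{n} φ₂(A^{m−1}) φ₂(A^{n−m}) for every n ≥ 0. Moreover 2 φ₂(X*X) = φ(ξ*ξ) + φ(ξ ξ*). (Remark 3.10; this is the short-cut proof that Φ*(a,a*) ≥ 2Φ*(μ).) -/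
open scoped BigOperators
open ComplexOrder

noncomputable section

variable {A : Type*} [Ring A] [Algebra ℂ A] [StarRing A]

/-- Selection: index `0` gives `x`, index `1` gives `star x`. -/
def sel {T : Type*} [Star T] (x : T) (i : Fin 2) : T := if i = 0 then x else star x

/-- The word `a_{i₁} ⋯ a_{iₙ}` in `a, a*` given by a list of indices. -/
def wordOf (a : A) (l : List (Fin 2)) : A := (l.map (sel a)).prod

/-- The pair `(ξ, ξ*)` fulfills the conjugate relations for `(a, a*)`. -/
def ConjRel (φ : A →ₗ[ℂ] ℂ) (a ξ : A) : Prop :=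
  ∀ (l : List (Fin 2)) (i : Fin 2),
    φ (sel ξ i * wordOf a l) =
      ∑ m ∈ Finset.range l.length,
        (if l.getD m 0 = i then φ (wordOf a (l.take m)) * φ (wordOf a (l.drop (m + 1)))
         else 0)

/-- The state `φ₂ = tr ⊗ φ` on `M₂(𝒜)`. -/
def phi2 (φ : A →ₗ[ℂ] ℂ) (X : M₂ A) : ℂ := (φ (X 0 0) + φ (X 1 1)) / 2

/-- The matrix `X = [[0, ξ*], [ξ, 0]]`. -/
def Xmat (ξ : A) : M₂ A := !![0, star ξ; ξ, 0]

/-- The conditional expectation `E_M : M₂(𝒜) → M₂(ℂ1)`. -/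
def EM (φ : A →ₗ[ℂ] ℂ) (X : M₂ A) : M₂ A := Matrix.of fun i j => algebraMap ℂ A (φ (X i j))

/-- The map `η([[x₁₁,x₁₂],[x₂₁,x₂₂]]) = [[x₂₂,0],[0,x₁₁]]` (restricting to `η₀` on `𝒟`). -/
def etaM (X : M₂ A) : M₂ A := !![X 1 1, 0; 0, X 0 0]

/-- `chain Am [B₀, B₁, …, Bₙ] = B₀ (Am B₁) (Am B₂) ⋯ (Am Bₙ)`. -/
def chain {T : Type*} [Ring T] (Am : T) : List T → T
  | [] => 1
  | B :: Bs => B * (Bs.map fun C => Am * C).prod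

/-- `X` fulfills the conjugate relations for `Amat a` w.r.t. the matrices satisfying `P`
and the completely positive map `etaM ∘ E`. -/
def MatConjEta (φ : A →ₗ[ℂ] ℂ) (a : A) (X : M₂ A) (P : M₂ A → Prop) (E : M₂ A → M₂ A) :
    Prop :=
  ∀ l : List (M₂ A), l ≠ [] → (∀ C ∈ l, P C) →
    phi2 φ (X * chain (Amat a) l) =
      ∑ m ∈ Finset.range (l.length - 1),
        phi2 φ (etaM (E (chain (Amat a) (l.take (m + 1)))) * chain (Amat a) (l.drop (m + 1)))

/-!
The powers of `A` are diagonal or antidiagonal, with the alternating words `a a* a ⋯` and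
`a* a a* ⋯` as nonzero entries. Hence `φ₂(Aⁿ) = 0` for odd `n`, and for even `n` it is the common
value under `φ` of the two alternating words of length `n`, which are cyclic rotations of one
another. For even `n` both sides of the relation vanish. For odd `n` the diagonal entries of `X Aⁿ`
are the two words `ξ_i a_i a_j a_i ⋯ a_i` with `j ≠ i`; the conjugate relations cut such a word at
each letter `a_i`, which leaves an alternating word of even length on either side.
-/

lemma drop_iterate {α : Type*} (f : α → α) (a : α) (m n : ℕ) :
    (List.iterate f a n).drop m = List.iterate f (f^[m] a) (n - m) := by
  induction m generalizing a n with
  | zero => rfl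
  | succ m ih =>
    cases n with
    | zero => simp [List.iterate]
    | succ n => simpa [List.iterate] using ih (f a) n

lemma rev_iterate_eq_self_iff_even (i : Fin 2) (n : ℕ) : Fin.rev^[n] i = i ↔ Even n := by
  rcases Nat.even_or_odd n with hn | hn
  · simp [Fin.rev_involutive.iterate_even hn, hn]
  · rw [Fin.rev_involutive.iterate_odd hn, ← Nat.not_odd_iff_even]
    fin_cases i <;> simp [hn]

section AlternatingWord

variable {R : Type*} [Ring R] [StarRing R]

/-- The word `a_i a_j a_i ⋯` of length `n` that alternates between `a` and `a*` and starts with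
`sel a i`. Since `Fin.rev` exchanges the two elements of `Fin 2`, it produces the next index. -/
def alternatingWord (a : R) (i : Fin 2) (n : ℕ) : R := wordOf a (List.iterate Fin.rev i n)

lemma alternatingWord_zero (a : R) (i : Fin 2) : alternatingWord a i 0 = 1 := rfl

lemma alternatingWord_succ' (a : R) (i : Fin 2) (n : ℕ) :
    alternatingWord a i (n + 1) = sel a i * alternatingWord a i.rev n := by
  simp [alternatingWord, wordOf, List.iterate]

lemma alternatingWord_succ (a : R) (i : Fin 2) (n : ℕ) :
    alternatingWord a i (n + 1) = alternatingWord a i n * sel a (Fin.rev^[n] i) := by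
  rw [alternatingWord, List.iterate_add]
  simp [alternatingWord, wordOf, List.iterate]

lemma Amat_apply (a : R) (i j : Fin 2) : Amat a i j = if i.rev = j then sel a i else 0 := by
  fin_cases i <;> fin_cases j <;> simp [Amat, sel]

lemma Amat_pow_apply (a : R) (n : ℕ) (i j : Fin 2) :
    (Amat a ^ n) i j = if Fin.rev^[n] i = j then alternatingWord a i n else 0 := by
  induction n generalizing i with
  | zero =>
    rw [pow_zero, alternatingWord_zero]
    exact Matrix.one_apply
  | succ n ih =>
    rw [pow_succ', Matrix.mul_apply, Finset.sum_eq_single i.rev]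
    · simp [Amat_apply, ih, alternatingWord_succ']
    · simp +contextual [Amat_apply, eq_comm]
    · simp

end AlternatingWord

lemma apply_alternatingWord_rev {φ : A →ₗ[ℂ] ℂ} (hφtr : ∀ x y : A, φ (x * y) = φ (y * x))
    (a : A) (i : Fin 2) {n : ℕ} (hn : Even n) :
    φ (alternatingWord a i.rev n) = φ (alternatingWord a i n) := by
  cases n with
  | zero => rfl
  | succ n =>
    have last_index : Fin.rev^[n] i.rev = i := (rev_iterate_eq_self_iff_even i (n + 1)).2 hn
    rw [alternatingWord_succ, last_index, hφtr, ← alternatingWord_succ']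

lemma phi2_Amat_pow_of_even {φ : A →ₗ[ℂ] ℂ} (hφtr : ∀ x y : A, φ (x * y) = φ (y * x))
    (a : A) (i : Fin 2) {n : ℕ} (hn : Even n) :
    phi2 φ (Amat a ^ n) = φ (alternatingWord a i n) := by
  have swap_start : φ (alternatingWord a 1 n) = φ (alternatingWord a 0 n) :=
    apply_alternatingWord_rev hφtr a 0 hn
  simp only [phi2, Amat_pow_apply, (rev_iterate_eq_self_iff_even _ n).2 hn, if_true]
  fin_cases i <;> simp [swap_start]

lemma phi2_Amat_pow_of_odd (φ : A →ₗ[ℂ] ℂ) (a : A) {n : ℕ} (hn : Odd n) :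
    phi2 φ (Amat a ^ n) = 0 := by
  have off_diagonal (i : Fin 2) : Fin.rev^[n] i ≠ i := by
    rwa [Ne, rev_iterate_eq_self_iff_even, Nat.not_even_iff_odd]
  simp [phi2, Amat_pow_apply, off_diagonal]

lemma phi2_Xmat_mul (φ : A →ₗ[ℂ] ℂ) (ξ : A) (B : M₂ A) :
    phi2 φ (Xmat ξ * B) = (φ (sel ξ 1 * B 1 0) + φ (sel ξ 0 * B 0 1)) / 2 := by
  simp [phi2, Xmat, sel, Matrix.mul_apply]

lemma two_mul_phi2_star_Xmat_mul_Xmat (φ : A →ₗ[ℂ] ℂ) (ξ : A) :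
    2 * phi2 φ (star (Xmat ξ) * Xmat ξ) = φ (star ξ * ξ) + φ (ξ * star ξ) := by
  simp [phi2, Xmat, Matrix.mul_apply, mul_div_cancel₀]

lemma ConjRel.apply_sel_mul_alternatingWord {φ : A →ₗ[ℂ] ℂ} {a ξ : A} (hconj : ConjRel φ a ξ)
    (i : Fin 2) (n : ℕ) :
    φ (sel ξ i * alternatingWord a i n) =
      ∑ m ∈ Finset.range n, if Even m then
        φ (alternatingWord a i m) * φ (alternatingWord a i.rev (n - 1 - m)) else 0 := by
  rw [alternatingWord, hconj, List.length_iterate]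
  refine Finset.sum_congr rfl fun m hm ↦ ?_
  rw [Finset.mem_range] at hm
  have letter : (List.iterate Fin.rev i n).getD m 0 = Fin.rev^[m] i := by simp [hm]
  have length_suffix : n - (m + 1) = n - 1 - m := by lia
  rw [letter, List.take_iterate, min_eq_left hm.le, drop_iterate, length_suffix,
    Function.iterate_succ_apply']
  simp only [rev_iterate_eq_self_iff_even]
  split_ifs with hm_even
  · rw [(rev_iterate_eq_self_iff_even i m).2 hm_even, alternatingWord, alternatingWord]
  · rfl

lemma ConjRel.apply_sel_mul_alternatingWord_of_odd {φ : A →ₗ[ℂ] ℂ} {a ξ : A}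
    (hconj : ConjRel φ a ξ) (hφtr : ∀ x y : A, φ (x * y) = φ (y * x))
    (i : Fin 2) {n : ℕ} (hn : Odd n) :
    φ (sel ξ i * alternatingWord a i n) =
      ∑ m ∈ Finset.range n, phi2 φ (Amat a ^ m) * phi2 φ (Amat a ^ (n - 1 - m)) := by
  rw [hconj.apply_sel_mul_alternatingWord]
  refine Finset.sum_congr rfl fun m hm ↦ ?_
  rw [Finset.mem_range] at hm
  split_ifs with hm_even
  · have length_suffix_even : Even (n - 1 - m) := by grind
    rw [phi2_Amat_pow_of_even hφtr a i hm_even,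
      phi2_Amat_pow_of_even hφtr a i.rev length_suffix_even]
  · rw [phi2_Amat_pow_of_odd φ a (Nat.not_even_iff_odd.1 hm_even), zero_mul]

lemma sum_phi2_Amat_pow_mul_of_even (φ : A →ₗ[ℂ] ℂ) (a : A) {n : ℕ} (hn : Even n) :
    ∑ m ∈ Finset.range n, phi2 φ (Amat a ^ m) * phi2 φ (Amat a ^ (n - 1 - m)) = 0 := by
  refine Finset.sum_eq_zero fun m hm ↦ ?_
  rw [Finset.mem_range] at hm
  rcases Nat.even_or_odd m with hm_even | hm_odd
  · have complement_odd : Odd (n - 1 - m) := by grind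
    rw [phi2_Amat_pow_of_odd φ a complement_odd, mul_zero]
  · rw [phi2_Amat_pow_of_odd φ a hm_odd, zero_mul]

theorem conjugate_relations_shortcut_general {φ : A →ₗ[ℂ] ℂ}
    (hφtr : ∀ x y : A, φ (x * y) = φ (y * x)) {a ξ : A} (hconj : ConjRel φ a ξ) :
    (∀ n : ℕ,
      phi2 φ (Xmat ξ * Amat a ^ n) =
        ∑ m ∈ Finset.range n, phi2 φ (Amat a ^ m) * phi2 φ (Amat a ^ (n - 1 - m))) ∧
    2 * phi2 φ (star (Xmat ξ) * Xmat ξ) = φ (star ξ * ξ) + φ (ξ * star ξ) := by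
  refine ⟨fun n ↦ ?_, two_mul_phi2_star_Xmat_mul_Xmat φ ξ⟩
  rw [phi2_Xmat_mul, Amat_pow_apply, Amat_pow_apply]
  rcases Nat.even_or_odd n with hn | hn
  · simp [Fin.rev_involutive.iterate_even hn, sum_phi2_Amat_pow_mul_of_even φ a hn]
  · simp [Fin.rev_involutive.iterate_odd hn, hconj.apply_sel_mul_alternatingWord_of_odd hφtr _ hn]

/-- Remark 3.10 (short-cut): if `(ξ, ξ*)` fulfills the conjugate relations for `(a, a*)`,
then `X = [[0,ξ*],[ξ,0]]` fulfills the conjugate relations for `A` with respect to the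
scalars, and moreover `2 φ₂(X*X) = φ(ξ*ξ) + φ(ξξ*)`. -/
theorem conjugate_relations_shortcut
    (φ : A →ₗ[ℂ] ℂ)
    (hφ1 : φ 1 = 1)
    (hφpos : ∀ x : A, 0 ≤ φ (star x * x))
    (hφtr : ∀ x y : A, φ (x * y) = φ (y * x))
    (a ξ : A) (hconj : ConjRel φ a ξ) :
    (∀ n : ℕ,
      phi2 φ (Xmat ξ * Amat a ^ n) =
        ∑ m ∈ Finset.range n, phi2 φ (Amat a ^ m) * phi2 φ (Amat a ^ (n - 1 - m))) ∧
    2 * phi2 φ (star (Xmat ξ) * Xmat ξ) = φ (star ξ * ξ) + φ (ξ * star ξ) := by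
  exact conjugate_relations_shortcut_general hφtr hconj
end
end

section
/- Let ℬ ⊆ 𝒜 be a unital *-subalgebra, d ≥ 1, and let g_ij ∈ 𝒜 (1 ≤ i, j ≤ d) satisfy g_ij* = g_ji, so that G := (g_ij) ∈ M_d(𝒜) is self-adjoint. Suppose ξ_ij ∈ 𝒜 with ξ_ij* = ξ_ji fulfill the conjugate relations for the self-adjoint family {g_ij} with respect to ℬ: for all n ≥ 0, all b₀, …, bₙ ∈ ℬ and all pairs (k, l), (k₁, l₁), …, (kₙ, lₙ): φ( ξ_{kl} b₀ g_{k₁l₁} b₁ ⋯ g_{kₙlₙ} bₙ ) = Σ_{m=1}^{n} δ_{(k,l),(kₘ,lₘ)} φ(b₀ g_{k₁l₁} ⋯ g_{k_{m−1}l_{m−1}} b_{m−1}) φ(bₘ g_{k_{m+1}l_{m+1}} ⋯ g_{kₙlₙ} bₙ). Then X := (1/d)·(ξ_ji)_{i,j} ∈ M_d(𝒜) fulfills the conjugate relations for G with respect to M_d(ℬ): for all n ≥ 0 and B₀, …, Bₙ ∈ M_d(ℬ), φ_d(X B₀ G B₁ ⋯ G Bₙ) = Σ_{m=1}^{n} φ_d(B₀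 G ⋯ G B_{m−1}) φ_d(Bₘ G ⋯ G Bₙ). Moreover φ_d(X*X) = d^{−3} Σ_{i,j=1}^{d} φ(ξ_ij* ξ_ij). (Proposition 4.1, 2°, yielding Φ*({g_ij} : ℬ) = d³ Φ*(G : M_d(ℬ)).) -/
open scoped BigOperators
open ComplexOrder

noncomputable section

variable {A : Type*} [Ring A] [Algebra ℂ A] [StarRing A] [StarModule ℂ A]

/-- The word `b₀ x₁ b₁ x₂ b₂ ⋯ xₙ bₙ`. -/
def interWord {T : Type*} [Ring T] {n : ℕ} (bs : Fin (n + 1) → T) (xs : Fin n → T) : T :=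
  bs 0 * (List.ofFn fun m : Fin n => xs m * bs m.succ).prod

/-- For `m : Fin n` (standing for the paper's index `m+1 ∈ {1, …, n}`), the prefix word
`b₀ x₁ b₁ ⋯ xₘ bₘ`. -/
def preWord {T : Type*} [Ring T] {n : ℕ} (bs : Fin (n + 1) → T) (xs : Fin n → T)
    (m : Fin n) : T :=
  bs 0 * ((List.ofFn fun j : Fin n => xs j * bs j.succ).take (m : ℕ)).prod

/-- For `m : Fin n` (standing for the paper's index `m+1 ∈ {1, …, n}`), the suffix word
`b_{m+1} x_{m+2} b_{m+2} ⋯ xₙ bₙ`. -/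
def sufWord {T : Type*} [Ring T] {n : ℕ} (bs : Fin (n + 1) → T) (xs : Fin n → T)
    (m : Fin n) : T :=
  bs m.succ * ((List.ofFn fun j : Fin n => xs j * bs j.succ).drop ((m : ℕ) + 1)).prod

/-- The normalized trace `φ_d = tr ⊗ φ` on `M_d(𝒜)`. -/
def phid {d : ℕ} (φ : A →ₗ[ℂ] ℂ) (X : Matrix (Fin d) (Fin d) A) : ℂ :=
  (∑ i, φ (X i i)) / d

/-- The entry `a_{kl}^{(ε)}` selected by an index triple `(k, l, ε)`:
`ε = 0` gives `a_{kl}`, `ε = 1` gives `(a_{kl})*`. -/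
def ent {d : ℕ} (a : Fin d → Fin d → A) (t : Fin d × Fin d × Fin 2) : A :=
  if t.2.2 = 0 then a t.1 t.2.1 else star (a t.1 t.2.1)

/-- The family `{ξ_ij, ξ_ij*}` fulfills the conjugate relations for `{a_ij, a_ij*}`
with respect to a unital *-subalgebra `B`. -/
def FamConjRel {d : ℕ} (φ : A →ₗ[ℂ] ℂ) (B : StarSubalgebra ℂ A)
    (a ξ : Fin d → Fin d → A) : Prop :=
  ∀ (n : ℕ) (bs : Fin (n + 1) → A) (idx : Fin n → Fin d × Fin d × Fin 2)
    (t : Fin d × Fin d × Fin 2),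
    (∀ m, bs m ∈ B) →
    φ (ent ξ t * interWord bs fun m => ent a (idx m)) =
      ∑ m : Fin n,
        (if idx m = t then
          φ (preWord bs (fun j => ent a (idx j)) m) *
            φ (sufWord bs (fun j => ent a (idx j)) m)
        else 0)

/-- `Xm` fulfills the conjugate relations for the matrix `Am` (paired with its adjoint,
matching on the index `e`) with respect to the matrices satisfying `P`. -/
def MatFamConjRel {d : ℕ} (φd : Matrix (Fin d) (Fin d) A → ℂ)
    (P : Matrix (Fin d) (Fin d) A → Prop)
    (Am Xm : Matrix (Fin d) (Fin d) A) (e : Fin 2) : Prop :=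
  ∀ (n : ℕ) (Bs : Fin (n + 1) → Matrix (Fin d) (Fin d) A) (i : Fin n → Fin 2),
    (∀ m, P (Bs m)) →
    φd (Xm * interWord Bs fun m => sel Am (i m)) =
      ∑ m : Fin n,
        (if i m = e then
          φd (preWord Bs (fun j => sel Am (i j)) m) *
            φd (sufWord Bs (fun j => sel Am (i j)) m)
        else 0)

/-!
Record the action of the free difference quotient `∂_{kl}` with respect to `g_{kl}` on the words in
the `g_{pq}` with coefficients in `ℬ` by its graph, a linear subspace of `𝒜 × (𝒜 ⊗ 𝒜)`. Expanding
the matrix product `B₀ G ⋯` and applying the Leibniz rule to the leading factor shows, by induction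
on `n`, that the `(i, j)` entry of `B₀ G B₁ ⋯ G Bₙ` is paired in this graph with
`∑ₘ (B₀ G ⋯ B_{m-1})_{ik} ⊗ (Bₘ G ⋯ Bₙ)_{lj}`. Applying `φ ⊗ φ` turns this into a formula for
`φ(ξ_{kl} (B₀ G ⋯ Bₙ)_{ij})`. Taking `(i, j) = (k, l)` and summing over `k, l` gives the conjugate
relations of `(ξ_{ji})` for the unnormalized trace; scaling a functional by `1 / d` scales its
conjugate variables by `1 / d` as well.
-/

open scoped TensorProduct

section Words

variable {T : Type*} [Ring T] {n : ℕ}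

lemma interWord_succ (bs : Fin (n + 2) → T) (xs : Fin (n + 1) → T) :
    interWord bs xs =
      bs 0 * xs 0 * interWord (fun m => bs m.succ) (fun m => xs m.succ) := by
  simp [interWord, List.ofFn_succ, mul_assoc]

lemma preWord_zero (bs : Fin (n + 2) → T) (xs : Fin (n + 1) → T) :
    preWord bs xs 0 = bs 0 := by
  simp [preWord]

lemma preWord_succ (bs : Fin (n + 2) → T) (xs : Fin (n + 1) → T) (m : Fin n) :
    preWord bs xs m.succ =
      bs 0 * xs 0 * preWord (fun j => bs j.succ) (fun j => xs j.succ) m := by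
  simp [preWord, List.ofFn_succ, mul_assoc]

lemma sufWord_zero (bs : Fin (n + 2) → T) (xs : Fin (n + 1) → T) :
    sufWord bs xs 0 = interWord (fun m => bs m.succ) (fun m => xs m.succ) := by
  simp [sufWord, interWord, List.ofFn_succ]

lemma sufWord_succ (bs : Fin (n + 2) → T) (xs : Fin (n + 1) → T) (m : Fin n) :
    sufWord bs xs m.succ = sufWord (fun j => bs j.succ) (fun j => xs j.succ) m := by
  simp [sufWord, List.ofFn_succ]

end Words

section DifferenceQuotient

variable (R : Type*) {T ι : Type*} [CommSemiring R] [Ring T] [Algebra R T] [DecidableEq ι] {n : ℕ}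

/-- The value `∑ₘ δ_{t, iₘ} (b₀ x_{i₁} ⋯ b_{m-1}) ⊗ (bₘ x_{iₘ₊₁} ⋯ bₙ)` of Voiculescu's free
difference quotient `∂_t` on the formal word `b₀ x_{i₁} b₁ ⋯ x_{iₙ} bₙ`. -/
def wordDiffQuot (bs : Fin (n + 1) → T) (x : ι → T) (idx : Fin n → ι) (t : ι) : T ⊗[R] T :=
  ∑ m, if idx m = t then
    preWord bs (fun j => x (idx j)) m ⊗ₜ[R] sufWord bs (fun j => x (idx j)) m else 0

-- The scalar action of `T` on `T ⊗[R] T` is multiplication on the left tensor factor.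
lemma wordDiffQuot_succ (bs : Fin (n + 2) → T) (x : ι → T) (idx : Fin (n + 1) → ι) (t : ι) :
    wordDiffQuot R bs x idx t =
      (if idx 0 = t then
        bs 0 ⊗ₜ interWord (fun m => bs m.succ) (fun m => x (idx m.succ)) else 0) +
      (bs 0 * x (idx 0)) • wordDiffQuot R (fun m => bs m.succ) x (fun m => idx m.succ) t := by
  simp only [wordDiffQuot, Fin.sum_univ_succ, preWord_zero, sufWord_zero, preWord_succ,
    sufWord_succ, Finset.smul_sum, smul_ite, smul_zero, TensorProduct.smul_tmul', smul_eq_mul]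

/-- The graph of the free difference quotient `∂_t` on the linear span of the words
`b₀ x_{i₁} b₁ ⋯ x_{iₙ} bₙ` with coefficients in `B`. It is only a linear relation, because the
`x_i` may satisfy algebraic relations over `B` that `∂_t` does not respect. -/
def diffQuotGraph (B : Set T) (x : ι → T) (t : ι) : Submodule R (T × T ⊗[R] T) :=
  Submodule.span R {p | ∃ (n : ℕ) (bs : Fin (n + 1) → T) (idx : Fin n → ι), (∀ m, bs m ∈ B) ∧
    p = (interWord bs fun m => x (idx m), wordDiffQuot R bs x idx t)}

variable {R} {B : Set T} {x : ι → T} {t : ι}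

lemma mk_zero_mem_diffQuotGraph {b : T} (hb : b ∈ B) : (b, 0) ∈ diffQuotGraph R B x t :=
  Submodule.subset_span ⟨0, fun _ => b, Fin.elim0, fun _ => hb, by simp [interWord, wordDiffQuot]⟩

lemma mul_mul_mem_diffQuotGraph {b : T} (hb : b ∈ B) (s : ι) {p : T × T ⊗[R] T}
    (hp : p ∈ diffQuotGraph R B x t) :
    (b * x s * p.1, (if s = t then b ⊗ₜ p.1 else 0) + (b * x s) • p.2) ∈
      diffQuotGraph R B x t := by
  induction hp using Submodule.span_induction with
  | mem p hp =>
    obtain ⟨n, bs, idx, hbs, rfl⟩ := hp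
    refine Submodule.subset_span ⟨n + 1, Fin.cons b bs, Fin.cons s idx, Fin.cases hb hbs, ?_⟩
    simp [interWord_succ, wordDiffQuot_succ]
  | zero => simp [Prod.mk_zero_zero]
  | add p q _ _ hp hq =>
    convert add_mem hp hq using 1
    split_ifs <;> simp [mul_add, TensorProduct.tmul_add, add_add_add_comm]
  | smul c p _ hp =>
    convert Submodule.smul_mem _ c hp using 1
    split_ifs <;> simp [smul_comm c]

end DifferenceQuotient

section ConjugateVariable

variable {R T ι : Type*} [CommSemiring R] [Ring T] [DecidableEq ι]

/-- The conjugate relations: `ξ` represents the free difference quotient `∂_t` of the family `x`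
with coefficients in `B` against the functional `φ`. A single variable is a family indexed by
`Unit`. -/
def IsConjugateVariable (φ : T → R) (B : Set T) (x : ι → T) (t : ι) (ξ : T) : Prop :=
  ∀ (n : ℕ) (bs : Fin (n + 1) → T) (idx : Fin n → ι), (∀ m, bs m ∈ B) →
    φ (ξ * interWord bs fun m => x (idx m)) =
      ∑ m, if idx m = t then
        φ (preWord bs (fun j => x (idx j)) m) * φ (sufWord bs (fun j => x (idx j)) m) else 0

variable [Algebra R T] {φ : T →ₗ[R] R} {B : Set T} {x : ι → T} {t : ι} {ξ : T}

lemma IsConjugateVariable.smul (h : IsConjugateVariable φ B x t ξ) (c : R) :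
    IsConjugateVariable ⇑(c • φ) B x t (c • ξ) := by
  intro n bs idx hbs
  simp only [LinearMap.smul_apply, smul_mul_assoc, map_smul, h n bs idx hbs, smul_eq_mul,
    Finset.mul_sum, mul_ite, mul_zero]
  refine Finset.sum_congr rfl fun m _ => ?_
  split_ifs <;> ring

lemma IsConjugateVariable.apply_of_mem_diffQuotGraph (h : IsConjugateVariable φ B x t ξ)
    {p : T × T ⊗[R] T} (hp : p ∈ diffQuotGraph R B x t) :
    φ (ξ * p.1) = LinearMap.mul' R R (TensorProduct.map φ φ p.2) := by
  induction hp using Submodule.span_induction with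
  | mem p hp =>
    obtain ⟨n, bs, idx, hbs, rfl⟩ := hp
    simp [h n bs idx hbs, wordDiffQuot, apply_ite (TensorProduct.map φ φ),
      apply_ite (LinearMap.mul' R R)]
  | zero => simp
  | add p q _ _ hp hq => simp [mul_add, hp, hq]
  | smul c p _ hp => simp [hp]

end ConjugateVariable

section Matrix

lemma matrix_mul_mul_apply {S l m n o : Type*} [NonUnitalSemiring S] [Fintype m] [Fintype n]
    (L : Matrix l m S) (M : Matrix m n S) (N : Matrix n o S) (i : l) (j : o) :
    (L * M * N) i j = ∑ p, ∑ q, L i p * M p q * N q j := by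
  simp only [Matrix.mul_apply, Finset.sum_mul]
  exact Finset.sum_comm

variable {R T ι : Type*} [CommSemiring R] [Ring T] [Algebra R T] [Fintype ι] [DecidableEq ι]
  {B : Set T} {G : Matrix ι ι T}

lemma sum_preWord_tmul_sufWord_succ {n : ℕ} (Bs : Fin (n + 2) → Matrix ι ι T) (k l i j : ι) :
    ∑ m, preWord Bs (fun _ => G) m i k ⊗ₜ[R] sufWord Bs (fun _ => G) m l j =
      ∑ p, ∑ q,
        ((if (p, q) = (k, l) then
          Bs 0 i p ⊗ₜ interWord (fun m => Bs m.succ) (fun _ => G) q j else 0) +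
        (Bs 0 i p * G p q) • ∑ m, preWord (fun m => Bs m.succ) (fun _ => G) m q k ⊗ₜ[R]
          sufWord (fun m => Bs m.succ) (fun _ => G) m l j) := by
  simp only [Fin.sum_univ_succ, preWord_zero, sufWord_zero, preWord_succ, sufWord_succ,
    matrix_mul_mul_apply, TensorProduct.sum_tmul, Finset.smul_sum, TensorProduct.smul_tmul',
    smul_eq_mul, Finset.sum_add_distrib]
  congr 1
  · simp [ite_and]
  · rw [Finset.sum_comm]
    exact Finset.sum_congr rfl fun p _ => Finset.sum_comm

lemma matrix_word_entry_mem_diffQuotGraph (k l i j : ι) {n : ℕ}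
    {Bs : Fin (n + 1) → Matrix ι ι T} (hBs : ∀ m, Bs m ∈ B.matrix) :
    (interWord Bs (fun _ => G) i j,
      ∑ m, preWord Bs (fun _ => G) m i k ⊗ₜ[R] sufWord Bs (fun _ => G) m l j) ∈
      diffQuotGraph R B (fun s : ι × ι => G s.1 s.2) (k, l) := by
  induction n generalizing i with
  | zero => simpa [interWord] using mk_zero_mem_diffQuotGraph (hBs 0 i j)
  | succ n ih =>
    rw [interWord_succ, matrix_mul_mul_apply, sum_preWord_tmul_sufWord_succ]
    convert sum_mem fun p (_ : p ∈ Finset.univ) => sum_mem fun q (_ : q ∈ Finset.univ) =>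
      mul_mul_mem_diffQuotGraph (hBs 0 i p) (p, q) (ih q fun m => hBs m.succ) using 1
    simp [Prod.ext_iff, Prod.fst_sum, Prod.snd_sum]

variable {φ : T →ₗ[R] R}

lemma IsConjugateVariable.apply_mul_matrix_word_entry {k l : ι} {ξ : T}
    (h : IsConjugateVariable φ B (fun s : ι × ι => G s.1 s.2) (k, l) ξ) (i j : ι) {n : ℕ}
    {Bs : Fin (n + 1) → Matrix ι ι T} (hBs : ∀ m, Bs m ∈ B.matrix) :
    φ (ξ * interWord Bs (fun _ => G) i j) =
      ∑ m, φ (preWord Bs (fun _ => G) m i k) * φ (sufWord Bs (fun _ => G) m l j) := by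
  simpa using h.apply_of_mem_diffQuotGraph (matrix_word_entry_mem_diffQuotGraph k l i j hBs)

theorem isConjugateVariable_trace_of_entries {ξ : Matrix ι ι T}
    (h : ∀ k l, IsConjugateVariable φ B (fun s : ι × ι => G s.1 s.2) (k, l) (ξ k l)) :
    IsConjugateVariable ⇑(φ ∘ₗ Matrix.traceLinearMap ι R T) B.matrix (fun _ : Unit => G) ()
      ξ.transpose := by
  intro n Bs _ hBs
  calc φ (ξ.transpose * interWord Bs fun _ => G).trace
    _ = ∑ l, ∑ k, φ (ξ k l * interWord Bs (fun _ => G) k l) := by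
      simp [Matrix.trace, Matrix.mul_apply]
    _ = ∑ l, ∑ k, ∑ m,
          φ (preWord Bs (fun _ => G) m k k) * φ (sufWord Bs (fun _ => G) m l l) := by
      simp only [(h _ _).apply_mul_matrix_word_entry _ _ hBs]
    _ = ∑ m, (∑ k, φ (preWord Bs (fun _ => G) m k k)) *
          ∑ l, φ (sufWord Bs (fun _ => G) m l l) := by
      simp only [Finset.sum_mul_sum]
      rw [Finset.sum_comm, Finset.sum_comm_cycle]
    _ = _ := by simp [Matrix.trace]

end Matrix

section NormalizedTrace

variable {d : ℕ}

lemma phid_eq_smul_trace {T : Type*} [Ring T] [Algebra ℂ T] (φ : T →ₗ[ℂ] ℂ) :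
    phid φ = ⇑((d : ℂ)⁻¹ • φ ∘ₗ Matrix.traceLinearMap (Fin d) ℂ T) := by
  ext X
  simp [phid, Matrix.trace, div_eq_inv_mul]

lemma phid_star_mul_self_smul_transpose (φ : A →ₗ[ℂ] ℂ) (c : ℂ) (ξ : Matrix (Fin d) (Fin d) A) :
    phid φ (star (c • ξ.transpose) * (c • ξ.transpose)) =
      star c * c * (∑ i, ∑ j, φ (star (ξ i j) * ξ i j)) / d := by
  simp [phid, Matrix.mul_apply, Matrix.star_apply, Finset.mul_sum, mul_assoc, mul_left_comm c]

theorem selfadjoint_matrix_conjugate_of_entry_conjugate_general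
    (hd : 0 < d) (φ : A →ₗ[ℂ] ℂ) (B : Set A)
    (G ξ : Matrix (Fin d) (Fin d) A)
    (h : ∀ k l, IsConjugateVariable φ B (fun s : Fin d × Fin d => G s.1 s.2) (k, l) (ξ k l)) :
    IsConjugateVariable (phid φ) B.matrix (fun _ : Unit => G) () ((d : ℂ)⁻¹ • ξ.transpose) ∧
      phid φ (star ((d : ℂ)⁻¹ • ξ.transpose) * ((d : ℂ)⁻¹ • ξ.transpose)) =
        ((d : ℂ) ^ 3)⁻¹ * ∑ i, ∑ j, φ (star (ξ i j) * ξ i j) := by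
  have hd₀ : (d : ℂ) ≠ 0 := Nat.cast_ne_zero.mpr hd.ne'
  refine ⟨phid_eq_smul_trace φ ▸ (isConjugateVariable_trace_of_entries h).smul _, ?_⟩
  rw [phid_star_mul_self_smul_transpose, star_inv₀, star_natCast]
  field_simp

end NormalizedTrace

/-- Proposition 4.1, 2°: if the family `{ξ_ij}` (with `ξ_ij* = ξ_ji`) fulfills the
conjugate relations for the self-adjoint family `{g_ij}` (with `g_ij* = g_ji`) w.r.t. `ℬ`,
then `X = (1/d)(ξ_ji)_{ij}` fulfills the conjugate relations for `G = (g_ij)` w.r.t.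
`M_d(ℬ)`, and `φ_d(X*X) = d⁻³ Σ_{ij} φ(ξ_ij* ξ_ij)`. -/
theorem selfadjoint_matrix_conjugate_of_entry_conjugate
    {d : ℕ} (hd : 0 < d)
    (φ : A →ₗ[ℂ] ℂ)
    (hφ1 : φ 1 = 1)
    (hφpos : ∀ x : A, 0 ≤ φ (star x * x))
    (hφtr : ∀ x y : A, φ (x * y) = φ (y * x))
    (B : StarSubalgebra ℂ A)
    (g ξ : Fin d → Fin d → A)
    (hg : ∀ i j, star (g i j) = g j i)
    (hξ : ∀ i j, star (ξ i j) = ξ j i)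
    (hconj : ∀ (n : ℕ) (bs : Fin (n + 1) → A) (idx : Fin n → Fin d × Fin d)
        (t : Fin d × Fin d),
      (∀ m, bs m ∈ B) →
      φ (ξ t.1 t.2 * interWord bs fun m => g (idx m).1 (idx m).2) =
        ∑ m : Fin n,
          (if idx m = t then
            φ (preWord bs (fun j => g (idx j).1 (idx j).2) m) *
              φ (sufWord bs (fun j => g (idx j).1 (idx j).2) m)
          else 0)) :
    let G : Matrix (Fin d) (Fin d) A := Matrix.of g
    let Xm : Matrix (Fin d) (Fin d) A := Matrix.of fun i j => (d : ℂ)⁻¹ • ξ j i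
    (∀ (n : ℕ) (Bs : Fin (n + 1) → Matrix (Fin d) (Fin d) A),
      (∀ m, ∀ i j, Bs m i j ∈ B) →
      phid φ (Xm * interWord Bs fun _ => G) =
        ∑ m : Fin n,
          phid φ (preWord Bs (fun _ => G) m) * phid φ (sufWord Bs (fun _ => G) m)) ∧
    phid φ (star Xm * Xm) =
      ((d : ℂ) ^ 3)⁻¹ * ∑ i : Fin d, ∑ j : Fin d, φ (star (ξ i j) * ξ i j) := by
  obtain ⟨hX, hnorm⟩ := selfadjoint_matrix_conjugate_of_entry_conjugate_general hd φ B
    (Matrix.of g) (Matrix.of ξ) fun k l n bs idx hbs => hconj n bs idx (k, l) hbs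
  exact ⟨fun n Bs hBs => (hX n Bs (fun _ => ()) hBs).trans (by simp only [if_true]), hnorm⟩
end
end
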